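/- Let 2 ≤ r < s be integers and let M be an indecomposable representation of Γ_r that is not simple. Then for every m with 1 ≤ m ≤ s−r, the inflation inf(M) does not have constant m-socle rank as a representation of Γ_s; that is, there exist U, V ∈ Gr_{m,s} with dim_k Soc_U(inf(M)) ≠ dim_k Soc_V(inf(M)). -/

import Mathlib

open Module LinearMap

universe u

/-- A finite-dimensional representation of the `r`-Kronecker quiver `Γ_r` over `k`:
two finite-dimensional `k`-vector spaces `M₁`, `M₂` and `r` linear maps `M₁ → M₂`. -/
structure KRep (k : Type u) [Field k] (r : ℕ) : Type (u + 1) where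
  V1 : Type u
  V2 : Type u
  [addV1 : AddCommGroup V1]
  [addV2 : AddCommGroup V2]
  [modV1 : Module k V1]
  [modV2 : Module k V2]
  [finV1 : FiniteDimensional k V1]
  [finV2 : FiniteDimensional k V2]
  f : Fin r → V1 →ₗ[k] V2

attribute [instance] KRep.addV1 KRep.addV2 KRep.modV1 KRep.modV2 KRep.finV1 KRep.finV2

variable {k : Type u} [Field k] {r : ℕ}

/-- For `α ∈ k^r`, the operator `x^M_α = ∑ i, αᵢ • M(γᵢ) : M₁ → M₂`. -/
def KRep.x (M : KRep k r) (α : Fin r → k) : M.V1 →ₗ[k] M.V2 :=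
  ∑ i, α i • M.f i

/-- The space `Hom(M, N)` of morphisms of representations, as a `k`-submodule of the
pairs of linear maps `(f₁ : M₁ → N₁, f₂ : M₂ → N₂)`; membership is the condition
`f₂ ∘ M(γᵢ) = N(γᵢ) ∘ f₁` for all `i`. -/
def KHom (M N : KRep k r) : Submodule k ((M.V1 →ₗ[k] N.V1) × (M.V2 →ₗ[k] N.V2)) where
  carrier := {p | ∀ i, p.2 ∘ₗ M.f i = N.f i ∘ₗ p.1}
  add_mem' := by
    intro a b ha hb i
    simp only [Prod.snd_add, Prod.fst_add, LinearMap.add_comp, LinearMap.comp_add, ha i, hb i]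
  zero_mem' := by intro i; simp
  smul_mem' := by
    intro c a ha i
    simp only [Prod.smul_snd, Prod.smul_fst, LinearMap.smul_comp, LinearMap.comp_smul, ha i]

/-- The representation `X_U` attached to a subspace `U ⊆ k^r`:
`(X_U)₁ = k`, `(X_U)₂ = k^r/U`, and `X_U(γᵢ)(c) = c · (eᵢ + U)`. -/
def XU (U : Submodule k (Fin r → k)) : KRep k r where
  V1 := k
  V2 := (Fin r → k) ⧸ U
  f := fun i => LinearMap.toSpanSingleton k _ (Submodule.Quotient.mk (Pi.single i 1))

/-- The `M₁`-part of the socle: `{m ∈ M₁ : x^M_u(m) = 0 for all u ∈ U}`. -/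
def KRep.socKer (M : KRep k r) (U : Submodule k (Fin r → k)) : Submodule k M.V1 :=
  ⨅ u ∈ U, LinearMap.ker (M.x u)

/-- `Soc_U(M) = {m ∈ M₁ : x^M_u(m) = 0 ∀ u ∈ U} ⊕ M₂`, as a subspace of `M₁ ⊕ M₂`. -/
def KRep.soc (M : KRep k r) (U : Submodule k (Fin r → k)) : Submodule k (M.V1 × M.V2) :=
  (M.socKer U).prod ⊤

/-- `Rad_U(M) = ∑_{u ∈ U} x^M_u(M₁) ⊆ M₂`. -/
def KRep.rad (M : KRep k r) (U : Submodule k (Fin r → k)) : Submodule k M.V2 :=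
  ⨆ u ∈ U, LinearMap.range (M.x u)

/-- Direct sum of two representations. -/
def KRep.sum (M N : KRep k r) : KRep k r where
  V1 := M.V1 × N.V1
  V2 := M.V2 × N.V2
  f := fun i => (M.f i).prodMap (N.f i)

/-- Isomorphism of representations. -/
def KIso (M N : KRep k r) : Prop :=
  ∃ (e1 : M.V1 ≃ₗ[k] N.V1) (e2 : M.V2 ≃ₗ[k] N.V2),
    ∀ i, (e2 : M.V2 →ₗ[k] N.V2) ∘ₗ M.f i = N.f i ∘ₗ (e1 : M.V1 →ₗ[k] N.V1)

/-- A representation is nonzero if its dimension vector is not `(0,0)`. -/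
def KRep.Nonzero (M : KRep k r) : Prop :=
  finrank k M.V1 ≠ 0 ∨ finrank k M.V2 ≠ 0

/-- A representation is indecomposable if it is nonzero and not isomorphic to a direct
sum of two nonzero representations. -/
def KRep.Indecomposable (M : KRep k r) : Prop :=
  M.Nonzero ∧ ∀ A B : KRep k r, A.Nonzero → B.Nonzero → ¬ KIso M (A.sum B)

/-- A representation is simple if its dimension vector is `(1,0)` or `(0,1)`. -/
def KRep.IsSimple (M : KRep k r) : Prop :=
  (finrank k M.V1 = 1 ∧ finrank k M.V2 = 0) ∨ (finrank k M.V1 = 0 ∧ finrank k M.V2 = 1)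

/-- `M` has constant `d`-socle rank: `dim_k Soc_U(M)` is independent of `U ∈ Gr_{d,r}`. -/
def KRep.ConstSocRank (d : ℕ) (M : KRep k r) : Prop :=
  ∃ c : ℕ, ∀ U : Submodule k (Fin r → k), finrank k U = d → finrank k (M.soc U) = c

/-- `M` has the equal `d`-socle property: `Soc_U(M)` is independent of `U ∈ Gr_{d,r}`. -/
def KRep.ESP (d : ℕ) (M : KRep k r) : Prop :=
  ∀ U V : Submodule k (Fin r → k), finrank k U = d → finrank k V = d → M.soc U = M.soc V

/-- `M` has constant `d`-radical rank: `dim_k Rad_U(M)` is independent of `U ∈ Gr_{d,r}`. -/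
def KRep.ConstRadRank (d : ℕ) (M : KRep k r) : Prop :=
  ∃ c : ℕ, ∀ U : Submodule k (Fin r → k), finrank k U = d → finrank k (M.rad U) = c

/-- `M` has the equal `d`-radical property: `Rad_U(M)` is independent of `U ∈ Gr_{d,r}`. -/
def KRep.ERP (d : ℕ) (M : KRep k r) : Prop :=
  ∀ U V : Submodule k (Fin r → k), finrank k U = d → finrank k V = d → M.rad U = M.rad V

/-- Inflation of a representation of `Γ_r` to a representation of `Γ_s` (for `r ≤ s`):
the same vector spaces, the first `r` arrows act as before, the remaining arrows act
as zero. -/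
def KRep.inflate (s : ℕ) (M : KRep k r) : KRep k s where
  V1 := M.V1
  V2 := M.V2
  f := fun i => if h : (i : ℕ) < r then M.f ⟨i, h⟩ else 0

/-!
The dimension of `Soc_U(N)` is maximal exactly when `U` lies in the subspace
`{α : x^N_α = 0}` of `k^s`. If that subspace is proper and has dimension at least `m ≥ 1`, then some
`m`-dimensional `U` lies inside it and some other one does not, so the `m`-socle rank of `N` is not
constant. For an inflation from `Γ_r` the maps span a space of dimension at most `r`, so by
rank-nullity the subspace has dimension at least `s - r`. It is proper because an indecomposable
representation all of whose maps vanish is simple: such a representation splits along any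
decomposition of its two vector spaces.
-/

theorem exists_submodule_le_finrank_eq {R V : Type*} [Semiring R] [StrongRankCondition R]
    [AddCommMonoid V] [Module R V] {K : Submodule R V} {m : ℕ} (hm : m ≤ finrank R K) :
    ∃ U ≤ K, finrank R U = m := by
  have := nontrivial_of_invariantBasisNumber R
  obtain ⟨b, hb⟩ := exists_linearIndependent_of_le_finrank hm
  refine ⟨Submodule.span R (Set.range (K.subtype ∘ b)), ?_, ?_⟩
  · rw [Submodule.span_le]
    rintro _ ⟨i, rfl⟩
    exact (b i).2
  · exact (finrank_span_eq_card (hb.map_injOn K.subtype K.injective_subtype.injOn)).trans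
      (Fintype.card_fin m)

theorem exists_submodule_not_le_finrank_eq {F V : Type*} [DivisionRing F] [AddCommGroup V]
    [Module F V] [FiniteDimensional F V] {K : Submodule F V} (hK : K ≠ ⊤) {m : ℕ} (hm : 1 ≤ m)
    (hmK : m ≤ finrank F K + 1) : ∃ U : Submodule F V, ¬ U ≤ K ∧ finrank F U = m := by
  obtain ⟨v, -, hv⟩ := SetLike.exists_of_lt hK.lt_top
  obtain ⟨W, hWK, hW⟩ := exists_submodule_le_finrank_eq (Nat.sub_le_of_le_add hmK)
  refine ⟨W ⊔ Submodule.span F {v}, fun hle => hv ?_, ?_⟩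
  · exact hle (Submodule.mem_sup_right (Submodule.mem_span_singleton_self v))
  · rw [Submodule.finrank_sup_span_singleton (fun hvW => hv (hWK hvW)), hW, Nat.sub_add_cancel hm]

namespace KRep

/-- The annihilator `{α ∈ k^r : x^M_α = 0}` of `M`, encoded as the kernel of the linear map
`α ↦ x^M_α`. It controls for which `U` the space `Soc_U(M)` is all of `M₁ ⊕ M₂`. -/
def ann (M : KRep k r) : Submodule k (Fin r → k) :=
  ker (Fintype.linearCombination k M.f)

theorem mem_ann {M : KRep k r} {α : Fin r → k} : α ∈ M.ann ↔ M.x α = 0 :=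
  Iff.rfl

theorem ann_eq_top_iff {M : KRep k r} : M.ann = ⊤ ↔ ∀ i, M.f i = 0 := by
  rw [ann, ker_eq_top, ← range_eq_bot, Fintype.range_linearCombination, Submodule.span_eq_bot,
    Set.forall_mem_range]

theorem finrank_ann (M : KRep k r) :
    finrank k M.ann = r - finrank k (Submodule.span k (Set.range M.f)) := by
  have rank_nullity := finrank_range_add_finrank_ker (Fintype.linearCombination k M.f)
  rw [Fintype.range_linearCombination, finrank_fin_fun] at rank_nullity
  exact Nat.eq_sub_of_add_eq' rank_nullity

theorem soc_eq_top_iff {M : KRep k r} {U : Submodule k (Fin r → k)} :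
    M.soc U = ⊤ ↔ U ≤ M.ann := by
  simp [soc, socKer, Submodule.prod_eq_top_iff, SetLike.le_def, mem_ann]

theorem exists_finrank_soc_ne {M : KRep k r} (hM : ∃ i, M.f i ≠ 0) {m : ℕ} (hm : 1 ≤ m)
    (hm_ann : m ≤ finrank k M.ann) :
    ∃ U V : Submodule k (Fin r → k), finrank k U = m ∧ finrank k V = m ∧
      finrank k (M.soc U) ≠ finrank k (M.soc V) := by
  have ann_ne_top : M.ann ≠ ⊤ := by simpa [ann_eq_top_iff] using hM
  obtain ⟨U, hU_le, hU⟩ := exists_submodule_le_finrank_eq hm_ann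
  obtain ⟨V, hV_not_le, hV⟩ :=
    exists_submodule_not_le_finrank_eq ann_ne_top hm (Nat.le_succ_of_le hm_ann)
  refine ⟨U, V, hU, hV, ?_⟩
  rw [soc_eq_top_iff.mpr hU_le, finrank_top]
  exact (Submodule.finrank_lt (soc_eq_top_iff.not.mpr hV_not_le)).ne'

theorem inflate_f_of_lt {s : ℕ} (M : KRep k r) {i : Fin s} (hi : (i : ℕ) < r) :
    (M.inflate s).f i = M.f ⟨i, hi⟩ :=
  dif_pos hi

theorem inflate_f_of_le {s : ℕ} (M : KRep k r) {i : Fin s} (hi : r ≤ i) :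
    (M.inflate s).f i = 0 :=
  dif_neg hi.not_gt

theorem range_inflate_f_subset (s : ℕ) (M : KRep k r) :
    Set.range (M.inflate s).f ⊆ insert 0 (Set.range M.f) := by
  rintro _ ⟨i, rfl⟩
  obtain hi | hi := lt_or_ge (i : ℕ) r
  · exact Or.inr ⟨⟨i, hi⟩, (M.inflate_f_of_lt hi).symm⟩
  · exact Or.inl (M.inflate_f_of_le hi)

theorem finrank_span_range_inflate_f_le (s : ℕ) (M : KRep k r) :
    finrank k (Submodule.span k (Set.range (M.inflate s).f)) ≤
      finrank k (Submodule.span k (Set.range M.f)) := by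
  let S : Submodule k (M.V1 →ₗ[k] M.V2) := Submodule.span k (Set.range (M.inflate s).f)
  have span_le : S ≤ Submodule.span k (Set.range M.f) :=
    (Submodule.span_mono (M.range_inflate_f_subset s)).trans_eq Submodule.span_insert_zero
  exact (Submodule.finrank_mono span_le :)

/-- The semisimple representation of `Γ_r` of dimension vector `(a, b)`: all maps vanish. -/
def semisimple (k : Type u) [Field k] (r a b : ℕ) : KRep k r where
  V1 := Fin a → k
  V2 := Fin b → k
  f := 0

theorem semisimple_nonzero_iff {a b : ℕ} : (semisimple k r a b).Nonzero ↔ a ≠ 0 ∨ b ≠ 0 := by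
  change finrank k (Fin a → k) ≠ 0 ∨ finrank k (Fin b → k) ≠ 0 ↔ _
  rw [finrank_fin_fun, finrank_fin_fun]

theorem kIso_semisimple_sum_semisimple {M : KRep k r} (hM : ∀ i, M.f i = 0) {a b c d : ℕ}
    (h1 : finrank k M.V1 = a + c) (h2 : finrank k M.V2 = b + d) :
    KIso M ((semisimple k r a b).sum (semisimple k r c d)) := by
  have e1 : M.V1 ≃ₗ[k] (Fin a → k) × (Fin c → k) := .ofFinrankEq _ _ (by simp [h1])
  have e2 : M.V2 ≃ₗ[k] (Fin b → k) × (Fin d → k) := .ofFinrankEq _ _ (by simp [h2])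
  have sum_f_eq_zero (i : Fin r) : ((semisimple k r a b).sum (semisimple k r c d)).f i = 0 :=
    prodMap_zero
  refine ⟨e1, e2, fun i => ?_⟩
  rw [hM i, sum_f_eq_zero i, comp_zero, zero_comp]

theorem Indecomposable.isSimple_of_f_eq_zero {M : KRep k r} (hind : M.Indecomposable)
    (hM : ∀ i, M.f i = 0) : M.IsSimple := by
  have indivisible {a b c d : ℕ} (h1 : finrank k M.V1 = a + c) (h2 : finrank k M.V2 = b + d) :
      ¬ ((a ≠ 0 ∨ b ≠ 0) ∧ (c ≠ 0 ∨ d ≠ 0)) := fun ⟨hab, hcd⟩ =>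
    hind.2 _ _ (semisimple_nonzero_iff.mpr hab) (semisimple_nonzero_iff.mpr hcd)
      (kIso_semisimple_sum_semisimple hM h1 h2)
  have hne := hind.1
  unfold Nonzero at hne
  unfold IsSimple
  by_cases h1 : finrank k M.V1 = 0
  · have not_split := indivisible (a := 0) (b := 1) (c := 0) (d := finrank k M.V2 - 1)
      (by omega) (by omega)
    omega
  · have not_split := indivisible (a := 1) (b := 0) (c := finrank k M.V1 - 1) (d := finrank k M.V2)
      (by omega) (by omega)
    omega

theorem Indecomposable.exists_f_ne_zero {M : KRep k r} (hind : M.Indecomposable)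
    (hns : ¬ M.IsSimple) : ∃ i, M.f i ≠ 0 := by
  contrapose! hns
  exact hind.isSimple_of_f_eq_zero hns

end KRep

theorem inflate_not_constSocRank_general {s : ℕ} (hrs : r ≤ s) (M : KRep k r)
    (hM : ∃ i, M.f i ≠ 0) {m : ℕ} (hm : 1 ≤ m)
    (hms : m ≤ s - finrank k (Submodule.span k (Set.range M.f))) :
    ∃ U V : Submodule k (Fin s → k), finrank k U = m ∧ finrank k V = m ∧
      finrank k ((M.inflate s).soc U) ≠ finrank k ((M.inflate s).soc V) := by
  obtain ⟨i, hi⟩ := hM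
  refine KRep.exists_finrank_soc_ne ⟨i.castLE hrs, ?_⟩ hm ?_
  · rwa [M.inflate_f_of_lt (i := i.castLE hrs) i.isLt]
  · rw [KRep.finrank_ann]
    exact hms.trans (Nat.sub_le_sub_left (M.finrank_span_range_inflate_f_le s) s)

/-- Let `2 ≤ r < s` and `M` an indecomposable non-simple
representation of `Γ_r`. Then for each `1 ≤ m ≤ s − r`, the inflation `inf(M)` does not
have constant `m`-socle rank over `Γ_s`: there are `U, V ∈ Gr_{m,s}` with
`dim_k Soc_U(inf(M)) ≠ dim_k Soc_V(inf(M))`. -/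
theorem inflate_not_constSocRank (s : ℕ) (hr : 2 ≤ r) (hrs : r < s) (M : KRep k r)
    (hind : M.Indecomposable) (hns : ¬ M.IsSimple)
    (m : ℕ) (hm : 1 ≤ m) (hms : m ≤ s - r) :
    ∃ U V : Submodule k (Fin s → k), finrank k U = m ∧ finrank k V = m ∧
      finrank k ((M.inflate s).soc U) ≠ finrank k ((M.inflate s).soc V) :=
  inflate_not_constSocRank_general hrs.le M (hind.exists_f_ne_zero hns) hm
    (hms.trans (Nat.sub_le_sub_left (finrank_range_le_card M.f |>.trans_eq (Fintype.card_fin r)) s))
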